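/- Let h > 0, κ > 0, C₁, C₂, C₃, C₄ > 0, r ≥ 0, 0 < t_* < t₀, R > 0, ξ ∈ (0,R). Let q : (0,t₀] × [0,R) → [0,∞) be continuously differentiable with q ≤ r on its domain, and let B : (0,t₀] × (0,R) → [0,∞) be continuous with B(t,ρ) ≤ C₁t^κ + C₂q(t,ρ) + C₃q(t,ρ)^{2/3} + C₄q(t,ρ)^{1/3} on the domain, and suppose t·∂q/∂t + h·q ≤ B·∂q/∂ρ on (0,t₀] × (0,R). Let ρ : (t_*,t₀] → (0,R) be differentiable with ρ′(t) = −B(t,ρ(t))/t and ρ(t₀) = ξ. Then for every t₁ ∈ (t_*, t₀): ξ ≤ ρ(t₁) ≤ ξ + (C₁/κ)(t₀^κ − t₁^κ) + (C₂/h)·r + (3C₃/(2h))·r^{2/3} + (3C₄/h)·r^{1/3}. -/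

import Mathlib

/-!
Along the characteristic curve, the chain rule turns the differential inequality into
`t * φ'(t) + h * φ(t) ≤ 0` for `φ t = q t (ρf t)`, so `t ^ h * φ t` is nonincreasing and `φ τ` is
at most `r * (t₁ / τ) ^ h` for `τ ≥ t₁` (`rpow_mul_antitoneOn_of_le`, `hasDerivAt_along_curve`).

Instead of integrating `ρf' = -B / t`, the proof uses an explicit antiderivative of the resulting
majorant of `B / τ`: each `(t₁ / τ) ^ a / τ` has antiderivative `-(t₁ / τ) ^ a / a`, so that
`ρf τ + (C₁ / κ) τ ^ κ - (C₂ / h) r (t₁ / τ) ^ h - ⋯` is nondecreasing on `[t₁, t₀]`. Comparing its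
values at the two endpoints gives the upper bound, and no integrability of `B` is required. The
lower bound is monotonicity of `ρf`, which holds because `B ≥ 0`.
-/

open Set Filter Topology

/-- Chain rule along a curve for a function of two real variables whose partial derivatives exist
and are continuous on an open set. -/
lemma hasDerivAt_along_curve {q qt qρ : ℝ → ℝ → ℝ} {U : Set (ℝ × ℝ)} (hU : IsOpen U)
    (hqt : ∀ p ∈ U, HasDerivAt (fun t => q t p.2) (qt p.1 p.2) p.1)
    (hqρ : ∀ p ∈ U, HasDerivAt (fun ρ => q p.1 ρ) (qρ p.1 p.2) p.2)
    (hqtc : ContinuousOn (fun p : ℝ × ℝ => qt p.1 p.2) U)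
    (hqρc : ContinuousOn (fun p : ℝ × ℝ => qρ p.1 p.2) U)
    {c : ℝ → ℝ} {c' t : ℝ} (hc : HasDerivAt c c' t) (hmem : (t, c t) ∈ U) :
    HasDerivAt (fun s => q s (c s)) (qt t (c t) + qρ t (c t) * c') t := by
  have hn : U ∈ 𝓝 (t, c t) := hU.mem_nhds hmem
  have key := hasStrictFDerivAt_uncurry_coprod (𝕜 := ℝ) (u := (t, c t)) (f := q)
    (f₁ := fun a b => ContinuousLinearMap.toSpanSingleton ℝ (qt a b))
    (f₂ := fun a b => ContinuousLinearMap.toSpanSingleton ℝ (qρ a b))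
    (by filter_upwards [hn] with p hp using (hqt p hp).hasFDerivAt)
    (by filter_upwards [hn] with p hp using (hqρ p hp).hasFDerivAt)
    ((ContinuousLinearMap.toSpanSingletonCLE (𝕜 := ℝ) (E := ℝ)).continuous.continuousAt.comp
      (hqtc.continuousAt hn))
    ((ContinuousLinearMap.toSpanSingletonCLE (𝕜 := ℝ) (E := ℝ)).continuous.continuousAt.comp
      (hqρc.continuousAt hn))
  have h2 := key.hasFDerivAt.comp_hasDerivAt t ((hasDerivAt_id t).prodMk hc)
  refine h2.congr_deriv ?_
  simp [Function.HasUncurry.uncurry, mul_comm]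

/-- Integrating factor: `t * φ' + h * φ ≤ 0` makes `t ^ h * φ t` nonincreasing. -/
lemma rpow_mul_antitoneOn_of_le {φ φ' : ℝ → ℝ} {a b h : ℝ} (ha : 0 < a)
    (hφ : ∀ t ∈ Ioo a b, HasDerivAt φ (φ' t) t)
    (hle : ∀ t ∈ Ioo a b, t * φ' t + h * φ t ≤ 0) :
    AntitoneOn (fun t => t ^ h * φ t) (Ioo a b) := by
  have hd : ∀ t ∈ Ioo a b, HasDerivAt (fun t => t ^ h * φ t)
      (t ^ (h - 1) * (t * φ' t + h * φ t)) t := by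
    intro t ht
    have h0 : 0 < t := ha.trans ht.1
    refine ((Real.hasDerivAt_rpow_const (p := h) (Or.inl h0.ne')).mul (hφ t ht)).congr_deriv ?_
    have : t ^ h = t ^ (h - 1) * t := by
      rw [← Real.rpow_add_one h0.ne']; simp
    rw [this]; ring
  refine antitoneOn_of_hasDerivWithinAt_nonpos (convex_Ioo a b)
    (f' := fun t => t ^ (h - 1) * (t * φ' t + h * φ t))
    (fun t ht => (hd t ht).continuousAt.continuousWithinAt) ?_ ?_
  · intro t ht
    rw [interior_Ioo] at ht
    exact (hd t ht).hasDerivWithinAt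
  · intro t ht
    rw [interior_Ioo] at ht
    exact mul_nonpos_of_nonneg_of_nonpos
      (Real.rpow_nonneg (ha.trans ht.1).le _) (hle t ht)

lemma hasDerivAt_div_rpow {t₁ τ : ℝ} (a : ℝ) (h₁ : 0 < t₁) (hτ : 0 < τ) :
    HasDerivAt (fun s => (t₁ / s) ^ a) (-a * (t₁ / τ) ^ a / τ) τ := by
  have hq : 0 < t₁ / τ := div_pos h₁ hτ
  have h2 := ((hasDerivAt_const τ t₁).fun_div (hasDerivAt_id' τ) hτ.ne').rpow_const
    (p := a) (Or.inl hq.ne')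
  refine h2.congr_deriv ?_
  rw [Real.rpow_sub_one hq.ne']
  field_simp
  ring

/-- **Lemma 8 (a priori bound for the characteristic curve).**  Under the differential
inequality `t·∂q/∂t + h·q ≤ B·∂q/∂ρ` with `0 ≤ q ≤ r` and
`B ≤ C₁t^κ + C₂q + C₃q^{2/3} + C₄q^{1/3}`, `B ≥ 0`, any characteristic curve `ρf` with
`ρf′(t) = −B(t,ρf(t))/t`, `ρf(t₀) = ξ`, values in `(0,R)`, satisfies
`ξ ≤ ρf(t₁) ≤ ξ + (C₁/κ)(t₀^κ − t₁^κ) + (C₂/h)r + (3C₃/2h)r^{2/3} + (3C₄/h)r^{1/3}`. -/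
theorem characteristic_apriori_bound
    (h κ C₁ C₂ C₃ C₄ r tstar t₀ R ξ : ℝ)
    (hh : 0 < h) (hκ : 0 < κ) (hC₁ : 0 < C₁) (hC₂ : 0 < C₂) (hC₃ : 0 < C₃) (hC₄ : 0 < C₄)
    (hr : 0 ≤ r) (htstar : 0 < tstar) (ht : tstar < t₀) (hR : 0 < R)
    (hξ : ξ ∈ Set.Ioo (0 : ℝ) R)
    (q qt qρ B : ℝ → ℝ → ℝ)
    (hqnn : ∀ t ∈ Set.Ioc (0 : ℝ) t₀, ∀ ρ ∈ Set.Ico (0 : ℝ) R, 0 ≤ q t ρ)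
    (hqr : ∀ t ∈ Set.Ioc (0 : ℝ) t₀, ∀ ρ ∈ Set.Ico (0 : ℝ) R, q t ρ ≤ r)
    (hqt : ∀ t ∈ Set.Ioc (0 : ℝ) t₀, ∀ ρ ∈ Set.Ico (0 : ℝ) R,
      HasDerivAt (fun t' => q t' ρ) (qt t ρ) t)
    (hqρ : ∀ t ∈ Set.Ioc (0 : ℝ) t₀, ∀ ρ ∈ Set.Ico (0 : ℝ) R,
      HasDerivAt (fun ρ' => q t ρ') (qρ t ρ) ρ)
    (hqtc : ContinuousOn (fun p : ℝ × ℝ => qt p.1 p.2)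
      (Set.Ioc (0 : ℝ) t₀ ×ˢ Set.Ico (0 : ℝ) R))
    (hqρc : ContinuousOn (fun p : ℝ × ℝ => qρ p.1 p.2)
      (Set.Ioc (0 : ℝ) t₀ ×ˢ Set.Ico (0 : ℝ) R))
    (hBc : ContinuousOn (fun p : ℝ × ℝ => B p.1 p.2)
      (Set.Ioc (0 : ℝ) t₀ ×ˢ Set.Ioo (0 : ℝ) R))
    (hBnn : ∀ t ∈ Set.Ioc (0 : ℝ) t₀, ∀ ρ ∈ Set.Ioo (0 : ℝ) R, 0 ≤ B t ρ)
    (hBbd : ∀ t ∈ Set.Ioc (0 : ℝ) t₀, ∀ ρ ∈ Set.Ioo (0 : ℝ) R,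
      B t ρ ≤ C₁ * t ^ κ + C₂ * q t ρ + C₃ * (q t ρ) ^ ((2 : ℝ)/3)
        + C₄ * (q t ρ) ^ ((1 : ℝ)/3))
    (hineq : ∀ t ∈ Set.Ioc (0 : ℝ) t₀, ∀ ρ ∈ Set.Ioo (0 : ℝ) R,
      t * qt t ρ + h * q t ρ ≤ B t ρ * qρ t ρ)
    (ρf : ℝ → ℝ)
    (hρf : ∀ t ∈ Set.Ioc tstar t₀, ρf t ∈ Set.Ioo (0 : ℝ) R ∧
      HasDerivAt ρf (-(B t (ρf t)) / t) t)
    (hρf0 : ρf t₀ = ξ) :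
    ∀ t₁ ∈ Set.Ioo tstar t₀,
      ξ ≤ ρf t₁ ∧
      ρf t₁ ≤ ξ + (C₁ / κ) * (t₀ ^ κ - t₁ ^ κ) + (C₂ / h) * r
        + (3 * C₃ / (2 * h)) * r ^ ((2 : ℝ)/3) + (3 * C₄ / h) * r ^ ((1 : ℝ)/3) := by
  intro t₁ ht₁
  have h₁ : 0 < t₁ := htstar.trans ht₁.1
  have hmem : ∀ t ∈ Icc t₁ t₀, t ∈ Ioc tstar t₀ := fun t h => ⟨ht₁.1.trans_le h.1, h.2⟩
  have hpos : ∀ t ∈ Ioc tstar t₀, t ∈ Ioc 0 t₀ := fun t h => ⟨htstar.trans h.1, h.2⟩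
  have hl : t₁ ∈ Icc t₁ t₀ := left_mem_Icc.2 ht₁.2.le
  have hr' : t₀ ∈ Icc t₁ t₀ := right_mem_Icc.2 ht₁.2.le
  constructor
  · have hanti : AntitoneOn ρf (Icc t₁ t₀) := by
      refine antitoneOn_of_hasDerivWithinAt_nonpos (convex_Icc _ _)
        (f' := fun t => -(B t (ρf t)) / t)
        (fun t h => (hρf t (hmem t h)).2.continuousAt.continuousWithinAt)
        (fun t h => (hρf t (hmem t (interior_subset h))).2.hasDerivWithinAt) ?_
      intro t h
      have hm := hmem t (interior_subset h)
      exact div_nonpos_of_nonpos_of_nonneg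
        (neg_nonpos.2 (hBnn t (hpos t hm) _ (hρf t hm).1)) (hpos t hm).1.le
    rw [← hρf0]
    exact hanti hl hr' ht₁.2.le
  -- The chain rule needs two-sided neighbourhoods, so the decay is derived on the open interval
  -- only; the endpoint `t₀` is covered later by continuity of `ρf` alone.
  have hdecay : AntitoneOn (fun t => t ^ h * q t (ρf t)) (Ioo tstar t₀) := by
    refine rpow_mul_antitoneOn_of_le htstar
      (φ' := fun t => qt t (ρf t) + qρ t (ρf t) * (-(B t (ρf t)) / t)) ?_ ?_
    · intro t h
      have hm : t ∈ Ioc tstar t₀ := ⟨h.1, h.2.le⟩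
      have hsub : Ioo 0 t₀ ×ˢ Ioo 0 R ⊆ Ioc 0 t₀ ×ˢ Ico 0 R :=
        prod_mono Ioo_subset_Ioc_self Ioo_subset_Ico_self
      exact hasDerivAt_along_curve (isOpen_Ioo.prod isOpen_Ioo)
        (fun p hp => hqt _ (hsub hp).1 _ (hsub hp).2)
        (fun p hp => hqρ _ (hsub hp).1 _ (hsub hp).2)
        (hqtc.mono hsub) (hqρc.mono hsub) (hρf t hm).2
        ⟨⟨htstar.trans h.1, h.2⟩, (hρf t hm).1⟩
    · intro t h
      have hm : t ∈ Ioc tstar t₀ := ⟨h.1, h.2.le⟩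
      have h0 : t ≠ 0 := (hpos t hm).1.ne'
      have := hineq t (hpos t hm) _ (hρf t hm).1
      have e : t * (qt t (ρf t) + qρ t (ρf t) * (-(B t (ρf t)) / t))
          = t * qt t (ρf t) - B t (ρf t) * qρ t (ρf t) := by
        field_simp
        ring
      simp only [e]
      linarith
  have hqle : ∀ τ ∈ Ioo t₁ t₀, q τ (ρf τ) ≤ r * (t₁ / τ) ^ h := by
    intro τ hτ
    have h0 : 0 < τ := h₁.trans hτ.1
    have h2 := hdecay ht₁ ⟨ht₁.1.trans hτ.1, hτ.2⟩ hτ.1.le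
    have hm := hmem t₁ hl
    have h3 := hqr t₁ (hpos _ hm) _ (Ioo_subset_Ico_self (hρf _ hm).1)
    rw [Real.div_rpow h₁.le h0.le, ← mul_div_assoc, le_div_iff₀ (Real.rpow_pos_of_pos h0 _)]
    have h4 := mul_le_mul_of_nonneg_left h3 (Real.rpow_nonneg h₁.le h)
    simp only at h2
    linarith
  have hpow : ∀ τ ∈ Ioo t₁ t₀, ∀ b : ℝ, 0 ≤ b →
      q τ (ρf τ) ^ b ≤ r ^ b * (t₁ / τ) ^ (h * b) := by
    intro τ hτ b hb
    have hm := hmem τ (Ioo_subset_Icc_self hτ)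
    have hd : 0 ≤ t₁ / τ := (div_pos h₁ (h₁.trans hτ.1)).le
    rw [Real.rpow_mul hd, ← Real.mul_rpow hr (Real.rpow_nonneg hd _)]
    exact Real.rpow_le_rpow
      (hqnn _ (hpos _ hm) _ (Ioo_subset_Ico_self (hρf _ hm).1)) (hqle τ hτ) hb
  let G : ℝ → ℝ := fun τ => ρf τ + (C₁ / κ) * τ ^ κ - (C₂ / h * r) * (t₁ / τ) ^ h
    - (3 * C₃ / (2 * h) * r ^ ((2 : ℝ)/3)) * (t₁ / τ) ^ (h * (2/3))
    - (3 * C₄ / h * r ^ ((1 : ℝ)/3)) * (t₁ / τ) ^ (h * (1/3))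
  let G' : ℝ → ℝ := fun τ => (-(B τ (ρf τ)) + (C₁ * τ ^ κ + C₂ * (r * (t₁ / τ) ^ h)
    + C₃ * (r ^ ((2 : ℝ)/3) * (t₁ / τ) ^ (h * (2/3)))
    + C₄ * (r ^ ((1 : ℝ)/3) * (t₁ / τ) ^ (h * (1/3))))) / τ
  have hG : ∀ τ ∈ Icc t₁ t₀, HasDerivAt G (G' τ) τ := by
    intro τ hτ
    have hm := hmem τ hτ
    have h0 : 0 < τ := (hpos τ hm).1
    have hd := (((((hρf τ hm).2.fun_add
      ((Real.hasDerivAt_rpow_const (p := κ) (Or.inl h0.ne')).const_mul (C₁ / κ))).fun_sub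
      ((hasDerivAt_div_rpow h h₁ h0).const_mul (C₂ / h * r))).fun_sub
      ((hasDerivAt_div_rpow (h * (2/3)) h₁ h0).const_mul
        (3 * C₃ / (2 * h) * r ^ ((2 : ℝ)/3)))).fun_sub
      ((hasDerivAt_div_rpow (h * (1/3)) h₁ h0).const_mul (3 * C₄ / h * r ^ ((1 : ℝ)/3))))
    refine hd.congr_deriv ?_
    simp only [G']
    rw [Real.rpow_sub_one h0.ne']
    generalize (t₁ / τ) ^ h = x
    generalize (t₁ / τ) ^ (h * (2/3)) = y
    generalize (t₁ / τ) ^ (h * (1/3)) = z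
    generalize r ^ ((2 : ℝ)/3) = u
    generalize r ^ ((1 : ℝ)/3) = v
    generalize τ ^ κ = w
    field_simp
    ring
  have hmono : MonotoneOn G (Icc t₁ t₀) := by
    refine monotoneOn_of_hasDerivWithinAt_nonneg (convex_Icc _ _) (f' := G')
      (fun t h => (hG t h).continuousAt.continuousWithinAt)
      (fun t h => (hG t (interior_subset h)).hasDerivWithinAt) ?_
    intro τ hτ
    rw [interior_Icc] at hτ
    have hm := hmem τ (Ioo_subset_Icc_self hτ)
    have hB := hBbd τ (hpos τ hm) _ (hρf τ hm).1
    have e1 := mul_le_mul_of_nonneg_left (hqle τ hτ) hC₂.le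
    have e2 := mul_le_mul_of_nonneg_left (hpow τ hτ (2/3) (by norm_num)) hC₃.le
    have e3 := mul_le_mul_of_nonneg_left (hpow τ hτ (1/3) (by norm_num)) hC₄.le
    refine div_nonneg ?_ (hpos τ hm).1.le
    linarith
  have hfin := hmono hl hr' ht₁.2.le
  simp only [G, div_self h₁.ne', Real.one_rpow, hρf0] at hfin
  have hd : 0 ≤ t₁ / t₀ := (div_pos h₁ (htstar.trans ht)).le
  have p1 : 0 ≤ (C₂ / h * r) * (t₁ / t₀) ^ h := by positivity
  have p2 : 0 ≤ (3 * C₃ / (2 * h) * r ^ ((2 : ℝ)/3)) * (t₁ / t₀) ^ (h * (2/3)) := by positivity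
  have p3 : 0 ≤ (3 * C₄ / h * r ^ ((1 : ℝ)/3)) * (t₁ / t₀) ^ (h * (1/3)) := by positivity
  linarith
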